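/- arXiv:0903.5004 — 2 statements merged into one kernel-verified Lean document; each statement's English description precedes it below -/
import Mathlib

section
/- For the nilpotent algebra A on ℂ² = span{x, θ} with θ² = x and all other products of basis vectors zero, the Hochschild cohomology group Hⁿ(A,A) is 2-dimensional for every n ≥ 0. -/
/-- The underlying 2-dimensional complex vector space, with coordinates in the
basis `x = (1,0)`, `θ = (0,1)`. -/
abbrev V : Type := ℂ × ℂ

/-- A multiplication `V → V → V` is bilinear. -/
def IsBilin (m : V → V → V) : Prop :=
  (∀ a b c : V, m (a + b) c = m a c + m b c) ∧
  (∀ (s : ℂ) (a b : V), m (s • a) b = s • m a b) ∧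
  (∀ a b c : V, m a (b + c) = m a b + m a c) ∧
  (∀ (s : ℂ) (a b : V), m a (s • b) = s • m a b)

/-- Associativity of a multiplication. -/
def IsAssoc (m : V → V → V) : Prop :=
  ∀ a b c : V, m (m a b) c = m a (m b c)

/-- Two multiplications on `V` are isomorphic algebra structures. -/
def AlgIso (m m' : V → V → V) : Prop :=
  ∃ g : V ≃ₗ[ℂ] V, ∀ a b : V, m' a b = g.symm (m (g a) (g b))

/-- `d₁`: `x² = x`, `θ² = θ`, `xθ = θx = 0`. -/
def mul1 (a b : V) : V := (a.1 * b.1, a.2 * b.2)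
/-- `d₂`: `θ² = θ`, other products `0`. -/
def mul2 (a b : V) : V := (0, a.2 * b.2)
/-- `d₃`: `xθ = x`, `θ² = θ`, other products `0`. -/
def mul3 (a b : V) : V := (a.1 * b.2, a.2 * b.2)
/-- `d₄`: `θx = x`, `θ² = θ`, other products `0`. -/
def mul4 (a b : V) : V := (a.2 * b.1, a.2 * b.2)
/-- `d₅`: `xθ = θx = x`, `θ² = θ`, `x² = 0`. -/
def mul5 (a b : V) : V := (a.1 * b.2 + a.2 * b.1, a.2 * b.2)
/-- `d₆`: `θ² = x`, other products `0`. -/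
def mul6 (a b : V) : V := (a.2 * b.2, 0)

open Finset in
/-- The sequence obtained from `a : Fin (n+1) → V` by multiplying the entries
in positions `i` and `i+1`. -/
noncomputable def mergeAt (mul : V → V → V) {n : ℕ} (a : Fin (n + 1) → V) (i : Fin n) :
    Fin n → V := fun j =>
  if (j : ℕ) < (i : ℕ) then a (Fin.castSucc j)
  else if (j : ℕ) = (i : ℕ) then mul (a (Fin.castSucc j)) (a j.succ)
  else a j.succ

open Finset in
/-- The Hochschild coboundary of an `n`-cochain (as a raw function). -/
noncomputable def hD (mul : V → V → V) (n : ℕ) (f : (Fin n → V) → V) :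
    (Fin (n + 1) → V) → V := fun a =>
  mul (a 0) (f fun j => a j.succ)
    + ∑ i : Fin n, ((-1 : ℂ) ^ ((i : ℕ) + 1)) • f (mergeAt mul a i)
    + ((-1 : ℂ) ^ (n + 1)) • mul (f fun j => a (Fin.castSucc j)) (a (Fin.last n))

/-- Hochschild `n`-cochains: multilinear maps `Vⁿ → V`. -/
abbrev Cochain (n : ℕ) := MultilinearMap ℂ (fun _ : Fin n => V) V

/-- An `n`-cochain is a Hochschild cocycle. -/
def IsCocycle (mul : V → V → V) {n : ℕ} (φ : Cochain n) : Prop :=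
  ∀ a : Fin (n + 1) → V, hD mul n (⇑φ) a = 0

/-- A function `Vⁿ⁺¹ → V` is a Hochschild coboundary. -/
def IsCoboundary (mul : V → V → V) (n : ℕ) (f : (Fin (n + 1) → V) → V) : Prop :=
  ∃ ψ : Cochain n, hD mul n (⇑ψ) = f

/-!
Write `𝛏, 𝛉` for the basis dual to `x, θ`. Scalar cochains form the free algebra on `𝛏, 𝛉`, and the
Hochschild differential with trivial coefficients is the derivation `d` with `d 𝛉 = 0` and
`d 𝛏 = -𝛉𝛉`. Cup product with the degree-two cocycle `𝛉𝛏 + 𝛏𝛉` has a left inverse, evaluation of the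
first two arguments at `θ, x`, and an explicit homotopy makes the two inverse to each other on
cohomology. So scalar cohomology is two-periodic, of rank one in every degree, and the class of a
cocycle is read off from its value on `θ, x, θ, x, …`.

An `A`-valued cochain is a pair of scalar cochains `(f, g)`, its `x`- and `θ`-components, with
differential `(d f + [𝛉, g], d g)`, where `[𝛉, ·]` is the graded commutator. On cohomology `[𝛉, ·]`
vanishes: it maps the generator to a cocycle whose value on `θ, x, θ, x, …` is zero. Hence each of
the two components contributes one class in every degree.
-/

/-- Scalar `n`-cochains on the free module `k x ⊕ k θ`, in the coordinates used for `V`: `x` is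
`(1, 0)` and `θ` is `(0, 1)`. -/
abbrev ScalarCochain (k : Type*) [CommRing k] (n : ℕ) :=
  MultilinearMap k (fun _ : Fin n => k × k) k

namespace ScalarCochain

section Scalar

variable {k : Type*} [CommRing k] {n : ℕ}

local notation "𝛉" => LinearMap.snd k k k
local notation "𝛏" => LinearMap.fst k k k

/-- The cup product `ℓ ⌣ w` of a functional `ℓ` with a scalar cochain `w`. -/
def cupLeft (ℓ : k × k →ₗ[k] k) : ScalarCochain k n →ₗ[k] ScalarCochain k (n + 1) where
  toFun w := (ℓ.smulRight w).uncurryLeft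
  map_add' v w := by ext a; simp
  map_smul' c w := by ext a; simp [mul_left_comm]

/-- The cup product `w ⌣ ℓ` of a scalar cochain `w` with a functional `ℓ`. -/
def cupRight (ℓ : k × k →ₗ[k] k) : ScalarCochain k n →ₗ[k] ScalarCochain k (n + 1) where
  toFun w := ((LinearMap.toSpanSingleton k _ ℓ).compMultilinearMap w).uncurryRight
  map_add' v w := by ext a; simp
  map_smul' c w := by ext a; simp

/-- Evaluation of the first argument of a scalar cochain at the vector `v`. -/
def slice (v : k × k) : ScalarCochain k (n + 1) →ₗ[k] ScalarCochain k n :=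
  LinearMap.applyₗ v ∘ₗ (multilinearCurryLeftEquiv k (fun _ : Fin (n + 1) => k × k) k).toLinearMap

theorem cupLeft_apply (ℓ : k × k →ₗ[k] k) (w : ScalarCochain k n) (a : Fin (n + 1) → k × k) :
    cupLeft ℓ w a = ℓ (a 0) * w (Fin.tail a) := by
  simp [cupLeft]

theorem cupRight_apply (ℓ : k × k →ₗ[k] k) (w : ScalarCochain k n) (a : Fin (n + 1) → k × k) :
    cupRight ℓ w a = w (Fin.init a) * ℓ (a (Fin.last n)) := by
  simp [cupRight]

theorem slice_apply (v : k × k) (w : ScalarCochain k (n + 1)) (a : Fin n → k × k) :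
    slice v w a = w (Fin.cons v a) :=
  rfl

theorem apply_eq_slice_tail (w : ScalarCochain k (n + 1)) (a : Fin (n + 1) → k × k) :
    w a = slice (a 0) w (Fin.tail a) := by
  rw [slice_apply, Fin.cons_self_tail]

theorem slice_eq_smul_add_smul (v : k × k) (w : ScalarCochain k (n + 1)) :
    slice v w = v.2 • slice (0, 1) w + v.1 • slice (1, 0) w := by
  change w.curryLeft v = v.2 • w.curryLeft (0, 1) + v.1 • w.curryLeft (1, 0)
  rw [← map_smul, ← map_smul, ← map_add]
  congr 1
  ext <;> simp

theorem ext_slice {v w : ScalarCochain k (n + 1)} (hθ : slice (0, 1) v = slice (0, 1) w)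
    (hx : slice (1, 0) v = slice (1, 0) w) : v = w := by
  ext a
  rw [apply_eq_slice_tail v, apply_eq_slice_tail w, slice_eq_smul_add_smul _ v,
    slice_eq_smul_add_smul _ w, hθ, hx]

@[simp]
theorem slice_cupLeft (v : k × k) (ℓ : k × k →ₗ[k] k) (w : ScalarCochain k n) :
    slice v (cupLeft ℓ w) = ℓ v • w := by
  ext a
  simp [slice_apply, cupLeft_apply]

@[simp]
theorem slice_cupRight (v : k × k) (ℓ : k × k →ₗ[k] k) (w : ScalarCochain k (n + 1)) :
    slice v (cupRight ℓ w) = cupRight ℓ (slice v w) := by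
  ext a
  have hinit : Fin.init (Fin.cons v a : Fin (n + 2) → k × k) =
      (Fin.cons v (Fin.init a) : Fin (n + 1) → k × k) := by
    funext j
    cases j using Fin.cases <;> rfl
  simp only [slice_apply, cupRight_apply, hinit, ← Fin.succ_last, Fin.cons_succ]

theorem cupRight_eq_cupLeft (ℓ : k × k →ₗ[k] k) (w : ScalarCochain k 0) :
    cupRight ℓ w = cupLeft ℓ w := by
  ext a
  rw [cupRight_apply, cupLeft_apply, mul_comm, Subsingleton.elim (Fin.init a) (Fin.tail a)]
  rfl

theorem cupRight_cupLeft (ℓ ℓ' : k × k →ₗ[k] k) (w : ScalarCochain k n) :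
    cupRight ℓ' (cupLeft ℓ w) = cupLeft ℓ (cupRight ℓ' w) :=
  ext_slice (by simp) (by simp)

/-- The Hochschild differential with trivial coefficients of the algebra `θ² = x`, given by its
Leibniz rule `d (𝛉u + 𝛏v) = -𝛉(du) - 𝛉𝛉v - 𝛏(dv)`; see `d_apply_eq_sum` for the alternating sum. -/
def d : ∀ n, ScalarCochain k n →ₗ[k] ScalarCochain k (n + 1)
  | 0 => 0
  | n + 1 => -(cupLeft 𝛉 ∘ₗ (d n ∘ₗ slice (0, 1) + cupLeft 𝛉 ∘ₗ slice (1, 0)) +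
      cupLeft 𝛏 ∘ₗ d n ∘ₗ slice (1, 0))

@[simp]
theorem d_degree_zero (w : ScalarCochain k 0) : d 0 w = 0 :=
  rfl

@[simp]
theorem slice_d (v : k × k) (w : ScalarCochain k (n + 1)) :
    slice v (d (n + 1) w) = -(d n (slice v w) + v.2 • cupLeft 𝛉 (slice (1, 0) w)) := by
  simp only [d, LinearMap.neg_apply, LinearMap.add_apply, LinearMap.comp_apply, map_neg, map_add,
    map_smul, slice_cupLeft, LinearMap.fst_apply, LinearMap.snd_apply,
    slice_eq_smul_add_smul v w]
  abel

theorem d_cupLeft_snd (w : ScalarCochain k n) :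
    d (n + 1) (cupLeft 𝛉 w) = -cupLeft 𝛉 (d n w) :=
  ext_slice (by simp) (by simp)

theorem d_cupLeft_fst (w : ScalarCochain k n) :
    d (n + 1) (cupLeft 𝛏 w) = -(cupLeft 𝛉 (cupLeft 𝛉 w) + cupLeft 𝛏 (d n w)) :=
  ext_slice (by simp) (by simp)

theorem d_cupRight_snd : ∀ {n} (w : ScalarCochain k n),
    d (n + 1) (cupRight 𝛉 w) = cupRight 𝛉 (d n w)
  | 0, w => by simp [cupRight_eq_cupLeft, d_cupLeft_snd]
  | n + 1, w => ext_slice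
      (by simp [d_cupRight_snd (slice (0, 1) w), cupRight_cupLeft])
      (by simp [d_cupRight_snd (slice (1, 0) w)])

/-- Coboundaries of the scalar complex; in degree zero there are none but `0`. -/
def coboundaries : ∀ n, Submodule k (ScalarCochain k n)
  | 0 => ⊥
  | n + 1 => LinearMap.range (d n)

/-- The periodicity operator: cup product with the degree-two cocycle `𝛉𝛏 + 𝛏𝛉`. -/
def shift : ScalarCochain k n →ₗ[k] ScalarCochain k (n + 2) :=
  cupLeft 𝛉 ∘ₗ cupLeft 𝛏 + cupLeft 𝛏 ∘ₗ cupLeft 𝛉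

/-- Evaluation of the first two arguments at `θ, x`, a left inverse of `shift`. -/
def unshift : ScalarCochain k (n + 2) →ₗ[k] ScalarCochain k n :=
  slice (1, 0) ∘ₗ slice (0, 1)

/-- The homotopy between `shift ∘ unshift` and the identity; see `sub_shift_unshift`. -/
def shiftHomotopy : ScalarCochain k (n + 2) →ₗ[k] ScalarCochain k (n + 1) :=
  -(cupLeft 𝛏 ∘ₗ slice (0, 1) ∘ₗ slice (0, 1))

@[simp]
theorem unshift_shift (w : ScalarCochain k n) : unshift (shift w) = w := by
  simp [shift, unshift]

theorem unshift_d (w : ScalarCochain k (n + 2)) : unshift (d (n + 2) w) = d n (unshift w) := by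
  simp [unshift]

theorem d_shift (w : ScalarCochain k n) : d (n + 2) (shift w) = shift (d n w) := by
  simp only [shift, LinearMap.add_apply, LinearMap.comp_apply, map_add, map_neg, d_cupLeft_snd,
    d_cupLeft_fst]
  abel

theorem sub_shift_unshift (w : ScalarCochain k (n + 2)) :
    w - shift (unshift w) = d (n + 1) (shiftHomotopy w) + shiftHomotopy (d (n + 2) w) := by
  apply ext_slice
  · apply ext_slice <;> simp [shift, unshift, shiftHomotopy]
  · simp only [shift, unshift, shiftHomotopy, LinearMap.comp_apply, LinearMap.add_apply,
      LinearMap.neg_apply, map_sub, map_add, map_neg, slice_cupLeft, slice_d, LinearMap.snd_apply,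
      LinearMap.fst_apply, zero_smul, one_smul]
    abel

theorem sub_cupLeft_slice (w : ScalarCochain k 1) :
    w - cupLeft 𝛉 (slice (0, 1) w) = shiftHomotopy (d 1 w) :=
  ext_slice (by simp [shiftHomotopy]) (by simp [shiftHomotopy])

theorem shift_mem_coboundaries : ∀ {n} {w : ScalarCochain k n}, w ∈ coboundaries n →
    shift w ∈ coboundaries (n + 2)
  | 0, w, hw => by
    rw [(Submodule.mem_bot k).1 hw, map_zero]
    exact zero_mem _
  | n + 1, _, ⟨p, hp⟩ => ⟨shift p, by rw [d_shift, hp]⟩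

/-- The cocycle generating scalar cohomology: `(𝛉𝛏 + 𝛏𝛉)ᵐ` in degree `2m`, `(𝛉𝛏 + 𝛏𝛉)ᵐ𝛉` in degree
`2m + 1`. -/
def gen : ∀ n, ScalarCochain k n
  | 0 => MultilinearMap.constOfIsEmpty k _ 1
  | 1 => cupLeft 𝛉 (gen 0)
  | n + 2 => shift (gen n)

/-- The value of a scalar cochain on the alternating arguments `θ, x, θ, x, …`; on cocycles it is
the coordinate of the cohomology class with respect to `gen`. -/
def evalAlt : ∀ n, ScalarCochain k n →ₗ[k] k
  | 0 => (MultilinearMap.constLinearEquivOfIsEmpty k k (fun _ : Fin 0 => k × k) k).symm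
  | 1 => evalAlt 0 ∘ₗ slice (0, 1)
  | n + 2 => evalAlt n ∘ₗ unshift

theorem evalAlt_zero_smul_gen (w : ScalarCochain k 0) : evalAlt 0 w • gen 0 = w := by
  ext a
  rw [smul_apply, Subsingleton.elim a 0]
  exact mul_one _

theorem d_gen : ∀ n, d n (gen (k := k) n) = 0
  | 0 => rfl
  | 1 => by rw [gen, d_cupLeft_snd, d_degree_zero, map_zero, neg_zero]
  | n + 2 => by rw [gen, d_shift, d_gen n, map_zero]

@[simp]
theorem evalAlt_gen : ∀ n, evalAlt n (gen (k := k) n) = 1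
  | 0 => rfl
  | 1 => by simp [evalAlt, gen]
  | n + 2 => by simp [evalAlt, gen, evalAlt_gen n]

theorem evalAlt_d : ∀ {n} (w : ScalarCochain k n), evalAlt (n + 1) (d n w) = 0
  | 0, _ => map_zero _
  | 1, w => by simp [evalAlt, unshift]
  | n + 2, w => by rw [evalAlt, LinearMap.comp_apply, unshift_d, evalAlt_d]

theorem sub_evalAlt_smul_gen_mem_coboundaries : ∀ {n} {w : ScalarCochain k n}, d n w = 0 →
    w - evalAlt n w • gen n ∈ coboundaries n
  | 0, w, _ => by
    rw [evalAlt_zero_smul_gen, sub_self]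
    exact zero_mem _
  | 1, w, hw => by
    have h : w - evalAlt 1 w • gen 1 = 0 := by
      rw [gen, ← map_smul, evalAlt, LinearMap.comp_apply, evalAlt_zero_smul_gen,
        sub_cupLeft_slice, hw, map_zero]
    rw [h]
    exact zero_mem _
  | n + 2, w, hw => by
    have hhom : w - shift (unshift w) ∈ coboundaries (n + 2) :=
      ⟨shiftHomotopy w, by rw [sub_shift_unshift, hw, map_zero, add_zero]⟩
    have hred : unshift w - evalAlt n (unshift w) • gen n ∈ coboundaries n :=
      sub_evalAlt_smul_gen_mem_coboundaries (by rw [← unshift_d, hw, map_zero])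
    have h := add_mem hhom (shift_mem_coboundaries hred)
    rwa [map_sub, map_smul, sub_add_sub_cancel] at h

theorem exists_d_eq_of_evalAlt_eq_zero {w : ScalarCochain k (n + 1)} (hw : d (n + 1) w = 0)
    (h : evalAlt (n + 1) w = 0) : ∃ p, d n p = w := by
  simpa [h, coboundaries] using sub_evalAlt_smul_gen_mem_coboundaries hw

/-- The graded commutator `w ↦ 𝛉 w - (-1)ⁿ w 𝛉` with the functional `𝛉`. -/
def thetaComm (n : ℕ) : ScalarCochain k n →ₗ[k] ScalarCochain k (n + 1) :=
  cupLeft 𝛉 + (-1 : k) ^ (n + 1) • cupRight 𝛉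

@[simp]
theorem thetaComm_degree_zero (w : ScalarCochain k 0) : thetaComm 0 w = 0 := by
  simp [thetaComm, cupRight_eq_cupLeft]

theorem thetaComm_d (w : ScalarCochain k n) :
    thetaComm (n + 1) (d n w) = -d (n + 1) (thetaComm n w) := by
  simp only [thetaComm, LinearMap.add_apply, LinearMap.smul_apply, map_add, map_smul,
    d_cupLeft_snd, d_cupRight_snd, pow_succ _ (n + 1), mul_neg_one, neg_smul]
  abel

theorem unshift_thetaComm_shift (w : ScalarCochain k n) :
    unshift (thetaComm (n + 2) (shift w)) = thetaComm n w := by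
  simp [unshift, thetaComm, shift, pow_succ]

theorem evalAlt_thetaComm_gen : ∀ n, evalAlt (n + 1) (thetaComm n (gen (k := k) n)) = 0
  | 0 => by rw [thetaComm_degree_zero, map_zero]
  | 1 => by simp [evalAlt, unshift, thetaComm, gen, cupRight_eq_cupLeft]
  | n + 2 => by
    rw [evalAlt, LinearMap.comp_apply, gen, unshift_thetaComm_shift, evalAlt_thetaComm_gen n]

theorem exists_d_eq_thetaComm_gen (n : ℕ) : ∃ g, d n g = thetaComm n (gen (k := k) n) := by
  refine exists_d_eq_of_evalAlt_eq_zero ?_ (evalAlt_thetaComm_gen n)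
  rw [← neg_eq_zero, ← thetaComm_d, d_gen, map_zero]

theorem evalAlt_thetaComm_eq_zero : ∀ {n} {w : ScalarCochain k n}, d n w = 0 →
    evalAlt (n + 1) (thetaComm n w) = 0
  | 0, w, _ => by rw [thetaComm_degree_zero, map_zero]
  | n + 1, w, hw => by
    obtain ⟨p, hp⟩ := sub_evalAlt_smul_gen_mem_coboundaries hw
    rw [eq_add_of_sub_eq hp.symm, map_add, map_add, thetaComm_d, map_neg, evalAlt_d, map_smul,
      map_smul, evalAlt_thetaComm_gen, neg_zero, smul_zero, add_zero]

/-- The Hochschild differential of `A`-valued cochains, on pairs consisting of the `x`-component and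
the `θ`-component; see `hD_ofComponents`. -/
def pairD (n : ℕ) : ScalarCochain k n × ScalarCochain k n →ₗ[k]
    ScalarCochain k (n + 1) × ScalarCochain k (n + 1) :=
  LinearMap.prod ((d n).coprod (thetaComm n)) (d n ∘ₗ LinearMap.snd k _ _)

@[simp]
theorem pairD_apply (p : ScalarCochain k n × ScalarCochain k n) :
    pairD n p = (d n p.1 + thetaComm n p.2, d n p.2) :=
  rfl

theorem coeff_eq_zero_of_pairD_eq {g : ScalarCochain k (n + 1)} {c₁ c₂ : k}
    {p : ScalarCochain k n × ScalarCochain k n}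
    (hp : pairD n p = c₁ • (gen (n + 1), 0) + c₂ • (-g, gen (n + 1))) : c₁ = 0 ∧ c₂ = 0 := by
  obtain ⟨h₁, h₂⟩ := Prod.ext_iff.1 hp
  simp only [pairD_apply, Prod.smul_mk, Prod.mk_add_mk, smul_zero, zero_add] at h₁ h₂
  have hc₂ : c₂ = 0 := by simpa [evalAlt_d] using (congrArg (evalAlt (n + 1)) h₂).symm
  subst hc₂
  have hcomm := evalAlt_thetaComm_eq_zero (h₂.trans (zero_smul _ _))
  refine ⟨?_, rfl⟩
  simpa [evalAlt_d, hcomm] using (congrArg (evalAlt (n + 1)) h₁).symm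

theorem exists_pairD_eq_sub_smul_sub_smul {g : ScalarCochain k (n + 1)}
    (hg : d (n + 1) g = thetaComm (n + 1) (gen (n + 1)))
    {w : ScalarCochain k (n + 1) × ScalarCochain k (n + 1)} (hw : pairD (n + 1) w = 0) :
    ∃ c₁ c₂ : k, ∃ p, pairD n p = w - c₁ • (gen (n + 1), 0) - c₂ • (-g, gen (n + 1)) := by
  obtain ⟨f, h⟩ := w
  obtain ⟨hf, hh⟩ := Prod.ext_iff.1 hw
  simp only [pairD_apply, Prod.fst_zero, Prod.snd_zero] at hf hh
  obtain ⟨q, hq⟩ := sub_evalAlt_smul_gen_mem_coboundaries hh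
  set c₂ := evalAlt (n + 1) h
  have hcomm : thetaComm (n + 1) h = c₂ • d (n + 1) g - d (n + 1) (thetaComm n q) := by
    rw [eq_add_of_sub_eq hq.symm, map_add, map_smul, ← hg, thetaComm_d]
    abel
  have hcocycle : d (n + 1) (f + c₂ • g - thetaComm n q) = 0 := by
    rw [map_sub, map_add, map_smul, add_sub_assoc, ← hcomm, hf]
  obtain ⟨p, hp⟩ := sub_evalAlt_smul_gen_mem_coboundaries hcocycle
  refine ⟨evalAlt (n + 1) (f + c₂ • g - thetaComm n q), c₂, (p, q), Prod.ext ?_ ?_⟩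
  · rw [pairD_apply, hp]
    simp only [Prod.fst_sub, Prod.smul_mk, smul_neg]
    abel
  · simp [hq]

end Scalar

section Hochschild

variable {n : ℕ}

theorem mergeAt_zero (mul : V → V → V) (a : Fin (n + 2) → V) :
    mergeAt mul a 0 = Fin.cons (mul (a 0) (a 1)) (Fin.tail (Fin.tail a)) := by
  funext j
  cases j using Fin.cases <;> simp [mergeAt, Fin.tail]

theorem mergeAt_succ (mul : V → V → V) (a : Fin (n + 2) → V) (i : Fin n) :
    mergeAt mul a i.succ = Fin.cons (a 0) (mergeAt mul (Fin.tail a) i) := by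
  funext j
  cases j using Fin.cases <;> simp [mergeAt, Fin.tail]

theorem d_apply_eq_sum : ∀ {n} (w : ScalarCochain ℂ n) (a : Fin (n + 1) → V),
    d n w a = ∑ i : Fin n, (-1 : ℂ) ^ ((i : ℕ) + 1) * w (mergeAt mul6 a i)
  | 0, w, a => by simp
  | n + 1, w, a => by
    have hzero : w (mergeAt mul6 a 0) =
        (a 0).2 * ((a 1).2 * slice (1, 0) w (Fin.tail (Fin.tail a))) := by
      rw [mergeAt_zero, ← slice_apply, slice_eq_smul_add_smul]
      simp [mul6, mul_assoc]
    have hsucc (i : Fin n) : w (mergeAt mul6 a i.succ) =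
        slice (a 0) w (mergeAt mul6 (Fin.tail a) i) := by
      rw [mergeAt_succ, slice_apply]
    rw [apply_eq_slice_tail, slice_d, Fin.sum_univ_succ, hzero]
    simp only [hsucc, neg_apply, add_apply, smul_apply, smul_eq_mul, cupLeft_apply, d_apply_eq_sum,
      LinearMap.snd_apply, Fin.val_succ, pow_succ _ (_ + 1), mul_neg_one, neg_mul,
      Finset.sum_neg_distrib]
    simp [Fin.tail, add_comm]

/-- Assembles the `x`-component and the `θ`-component of a cochain. -/
def ofComponents (n : ℕ) : (ScalarCochain ℂ n × ScalarCochain ℂ n) ≃ₗ[ℂ] Cochain n where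
  toFun p := p.1.prod p.2
  invFun φ := ((LinearMap.fst ℂ ℂ ℂ).compMultilinearMap φ,
    (LinearMap.snd ℂ ℂ ℂ).compMultilinearMap φ)
  map_add' _ _ := rfl
  map_smul' _ _ := rfl
  left_inv _ := rfl
  right_inv _ := rfl

theorem hD_ofComponents (p : ScalarCochain ℂ n × ScalarCochain ℂ n) :
    hD mul6 n (ofComponents n p) = ofComponents (n + 1) (pairD n p) := by
  have happly {m} (q : ScalarCochain ℂ m × ScalarCochain ℂ m) (a) :
      ofComponents m q a = (q.1 a, q.2 a) := rfl
  funext a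
  ext
  · simp only [hD, happly, mul6, pairD_apply, add_apply, d_apply_eq_sum, thetaComm]
    simp only [Prod.fst_add, Prod.fst_sum, Prod.smul_fst, LinearMap.add_apply,
      LinearMap.smul_apply, add_apply, smul_apply, smul_eq_mul, cupLeft_apply, cupRight_apply,
      LinearMap.snd_apply, Fin.tail_def, Fin.init_def]
    ring
  · simp [hD, happly, mul6, d_apply_eq_sum, Prod.snd_sum]

theorem isCocycle_ofComponents_iff (p : ScalarCochain ℂ n × ScalarCochain ℂ n) :
    IsCocycle mul6 (ofComponents n p) ↔ pairD n p = 0 := by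
  rw [← (ofComponents (n + 1)).map_eq_zero_iff, MultilinearMap.ext_iff, IsCocycle,
    hD_ofComponents]
  rfl

theorem isCoboundary_ofComponents_iff (w : ScalarCochain ℂ (n + 1) × ScalarCochain ℂ (n + 1)) :
    IsCoboundary mul6 n (ofComponents (n + 1) w) ↔ ∃ p, pairD n p = w := by
  simp only [IsCoboundary, ← (ofComponents n).toEquiv.exists_congr_right, LinearEquiv.coe_toEquiv,
    hD_ofComponents, DFunLike.coe_injective.eq_iff, (ofComponents (n + 1)).injective.eq_iff]

end Hochschild

end ScalarCochain

open ScalarCochain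

/-- For the nilpotent algebra `d₆` (`θ² = x`, other products zero), the
Hochschild cohomology `Hⁿ(A,A)` is 2-dimensional for every `n ≥ 0`:
in degree `0` every 0-cochain is a cocycle (so `H⁰ = A` is 2-dimensional),
and in each degree `n + 1` there are two cocycles whose classes are linearly
independent and span the cohomology. -/
theorem stmt12 :
    (∀ φ : Cochain 0, IsCocycle mul6 φ) ∧
    (∀ n : ℕ, ∃ φ₁ φ₂ : Cochain (n + 1),
      IsCocycle mul6 φ₁ ∧ IsCocycle mul6 φ₂ ∧
      (∀ c₁ c₂ : ℂ, IsCoboundary mul6 n (c₁ • ⇑φ₁ + c₂ • ⇑φ₂) →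
        c₁ = 0 ∧ c₂ = 0) ∧
      (∀ φ : Cochain (n + 1), IsCocycle mul6 φ →
        ∃ c₁ c₂ : ℂ, IsCoboundary mul6 n (⇑φ - c₁ • ⇑φ₁ - c₂ • ⇑φ₂))) := by
  constructor
  · intro φ
    obtain ⟨p, rfl⟩ := (ofComponents 0).surjective φ
    simp [isCocycle_ofComponents_iff]
  · intro n
    obtain ⟨g, hg⟩ := exists_d_eq_thetaComm_gen (k := ℂ) (n + 1)
    refine ⟨ofComponents _ (gen (n + 1), 0), ofComponents _ (-g, gen (n + 1)), ?_, ?_, ?_, ?_⟩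
    · simp [isCocycle_ofComponents_iff, d_gen]
    · simp [isCocycle_ofComponents_iff, d_gen, hg]
    · intro c₁ c₂ h
      obtain ⟨p, hp⟩ := (isCoboundary_ofComponents_iff
        (c₁ • (gen (n + 1), 0) + c₂ • (-g, gen (n + 1)))).1 h
      exact coeff_eq_zero_of_pairD_eq hp
    · intro φ hφ
      obtain ⟨w, rfl⟩ := (ofComponents (n + 1)).surjective φ
      obtain ⟨c₁, c₂, hw⟩ := exists_pairD_eq_sub_smul_sub_smul hg
        ((isCocycle_ofComponents_iff w).1 hφ)
      exact ⟨c₁, c₂, (isCoboundary_ofComponents_iff _).2 hw⟩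
end

section
/- The six 2-dimensional complex algebras d₁ (x²=x, θ²=θ, xθ=θx=0), d₂ (θ²=θ, other products 0), d₃ (xθ=x, θ²=θ, other products 0), d₄ (θx=x, θ²=θ, other products 0), d₅ (xθ=θx=x, θ²=θ, x²=0), and d₆ (θ²=x, other products 0) are pairwise non-isomorphic. -/
/-!
Four properties of a multiplication separate the six algebras: having a left unit, having a right
unit, having a nonzero element of square zero, and having a nonzero idempotent. Units settle every
pair except `d₁`, `d₅` (both unital) and `d₂`, `d₆` (no unit on either side): `x² = 0` in `d₅` while
`d₁` is reduced, and `θ² = θ` in `d₂` while `d₆` is nilpotent. Since zero is the unique absorbing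
element, all four properties depend on the multiplication alone, so the algebras are not even
isomorphic as multiplicative magmas, and `ℂ` may be replaced by any nontrivial reduced semiring.
-/

section Magma

variable {A B : Type*} {m : A → A → A} {m' : B → B → B}

/-- Isomorphism of magmas, with multiplications as unbundled functions so that several of them can
be compared on the same type. -/
def MulIso (m : A → A → A) (m' : B → B → B) : Prop :=
  ∃ e : A ≃ B, Function.Semiconj₂ e m m'

/-- A two-sided absorbing element: the zero of an algebra, described without its addition. -/
def IsAbsorbing (m : A → A → A) (z : A) : Prop :=
  ∀ a, m z a = z ∧ m a z = z

/-- Existence of a left unit, as an isomorphism invariant. -/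
def HasLeftUnit (m : A → A → A) : Prop :=
  ∃ e, ∀ a, m e a = a

/-- Existence of a right unit, as an isomorphism invariant. -/
def HasRightUnit (m : A → A → A) : Prop :=
  ∃ e, ∀ a, m a e = a

/-- Existence of a nonzero element of square zero, where being zero is encoded as `IsAbsorbing`. -/
def HasNonzeroSquareZero (m : A → A → A) : Prop :=
  ∃ a, ¬ IsAbsorbing m a ∧ IsAbsorbing m (m a a)

/-- Existence of a nonzero idempotent, where being zero is encoded as `IsAbsorbing`. -/
def HasNonzeroIdempotent (m : A → A → A) : Prop :=
  ∃ a, ¬ IsAbsorbing m a ∧ m a a = a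

theorem IsAbsorbing.eq {z w : A} (hz : IsAbsorbing m z) (hw : IsAbsorbing m w) : z = w :=
  (hz w).1.symm.trans (hw z).2

theorem isAbsorbing_apply_iff {e : A ≃ B} (he : Function.Semiconj₂ e m m') {z : A} :
    IsAbsorbing m' (e z) ↔ IsAbsorbing m z := by
  simp only [IsAbsorbing, e.surjective.forall, ← he.eq, e.apply_eq_iff_eq]

theorem MulIso.symm (h : MulIso m m') : MulIso m' m := by
  obtain ⟨e, he⟩ := h
  exact ⟨e.symm, fun a b => by simp only [e.symm_apply_eq, he.eq, e.apply_symm_apply]⟩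

theorem MulIso.hasLeftUnit (h : MulIso m m') (hm : HasLeftUnit m) : HasLeftUnit m' := by
  obtain ⟨e, he⟩ := h
  obtain ⟨u, hu⟩ := hm
  exact ⟨e u, e.surjective.forall.2 fun a => by rw [← he.eq, hu]⟩

theorem MulIso.hasRightUnit (h : MulIso m m') (hm : HasRightUnit m) : HasRightUnit m' := by
  obtain ⟨e, he⟩ := h
  obtain ⟨u, hu⟩ := hm
  exact ⟨e u, e.surjective.forall.2 fun a => by rw [← he.eq, hu]⟩

theorem MulIso.hasNonzeroSquareZero (h : MulIso m m') (hm : HasNonzeroSquareZero m) :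
    HasNonzeroSquareZero m' := by
  obtain ⟨e, he⟩ := h
  obtain ⟨a, ha, haa⟩ := hm
  exact ⟨e a, by rwa [isAbsorbing_apply_iff he], by rwa [← he.eq, isAbsorbing_apply_iff he]⟩

theorem MulIso.hasNonzeroIdempotent (h : MulIso m m') (hm : HasNonzeroIdempotent m) :
    HasNonzeroIdempotent m' := by
  obtain ⟨e, he⟩ := h
  obtain ⟨a, ha, haa⟩ := hm
  exact ⟨e a, by rwa [isAbsorbing_apply_iff he], by rw [← he.eq, haa]⟩

instance : Std.Symm fun m m' : A → A → A => ¬ MulIso m m' where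
  symm _ _ := mt MulIso.symm

end Magma

theorem AlgIso.mulIso {m m' : V → V → V} (h : AlgIso m m') : MulIso m m' := by
  obtain ⟨g, hg⟩ := h
  exact ⟨g.symm.toEquiv, fun a b => by simp [hg]⟩

section Semiring

variable {R : Type*} [Semiring R]

/-- The multiplication of `d₁` over a semiring, as in `mul1`. -/
def d₁ (a b : R × R) : R × R := (a.1 * b.1, a.2 * b.2)

/-- The multiplication of `d₂` over a semiring, as in `mul2`. -/
def d₂ (a b : R × R) : R × R := (0, a.2 * b.2)

/-- The multiplication of `d₃` over a semiring, as in `mul3`. -/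
def d₃ (a b : R × R) : R × R := (a.1 * b.2, a.2 * b.2)

/-- The multiplication of `d₄` over a semiring, as in `mul4`. -/
def d₄ (a b : R × R) : R × R := (a.2 * b.1, a.2 * b.2)

/-- The multiplication of `d₅` over a semiring, as in `mul5`. -/
def d₅ (a b : R × R) : R × R := (a.1 * b.2 + a.2 * b.1, a.2 * b.2)

/-- The multiplication of `d₆` over a semiring, as in `mul6`. -/
def d₆ (a b : R × R) : R × R := (a.2 * b.2, 0)

theorem hasLeftUnit_d₁ : HasLeftUnit (d₁ (R := R)) := ⟨(1, 1), fun a => by simp [d₁]⟩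

theorem hasLeftUnit_d₄ : HasLeftUnit (d₄ (R := R)) := ⟨(0, 1), fun a => by simp [d₄]⟩

theorem hasLeftUnit_d₅ : HasLeftUnit (d₅ (R := R)) := ⟨(0, 1), fun a => by simp [d₅]⟩

theorem hasRightUnit_d₁ : HasRightUnit (d₁ (R := R)) := ⟨(1, 1), fun a => by simp [d₁]⟩

theorem hasRightUnit_d₃ : HasRightUnit (d₃ (R := R)) := ⟨(0, 1), fun a => by simp [d₃]⟩

theorem hasRightUnit_d₅ : HasRightUnit (d₅ (R := R)) := ⟨(0, 1), fun a => by simp [d₅]⟩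

theorem not_hasLeftUnit_d₂ [Nontrivial R] : ¬ HasLeftUnit (d₂ (R := R)) :=
  fun ⟨_, he⟩ => by simpa [d₂] using he (1, 0)

theorem not_hasLeftUnit_d₃ [Nontrivial R] : ¬ HasLeftUnit (d₃ (R := R)) :=
  fun ⟨_, he⟩ => by simpa [d₃] using he (1, 0)

theorem not_hasLeftUnit_d₆ [Nontrivial R] : ¬ HasLeftUnit (d₆ (R := R)) :=
  fun ⟨_, he⟩ => by simpa [d₆] using he (0, 1)

theorem not_hasRightUnit_d₂ [Nontrivial R] : ¬ HasRightUnit (d₂ (R := R)) :=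
  fun ⟨_, he⟩ => by simpa [d₂] using he (1, 0)

theorem not_hasRightUnit_d₄ [Nontrivial R] : ¬ HasRightUnit (d₄ (R := R)) :=
  fun ⟨_, he⟩ => by simpa [d₄] using he (1, 0)

theorem not_hasRightUnit_d₆ [Nontrivial R] : ¬ HasRightUnit (d₆ (R := R)) :=
  fun ⟨_, he⟩ => by simpa [d₆] using he (0, 1)

theorem isAbsorbing_d₁_zero : IsAbsorbing d₁ (0 : R × R) := fun a => by simp [d₁]

theorem isAbsorbing_d₂_zero : IsAbsorbing d₂ (0 : R × R) := fun a => by simp [d₂]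

theorem isAbsorbing_d₅_zero : IsAbsorbing d₅ (0 : R × R) := fun a => by simp [d₅]

theorem isAbsorbing_d₆_zero : IsAbsorbing d₆ (0 : R × R) := fun a => by simp [d₆]

theorem hasNonzeroSquareZero_d₅ [Nontrivial R] : HasNonzeroSquareZero (d₅ (R := R)) := by
  have x_sq : d₅ (1, 0) (1, 0) = (0 : R × R) := by simp [d₅]
  refine ⟨(1, 0), fun hx => ?_, x_sq ▸ isAbsorbing_d₅_zero⟩
  simpa using hx.eq isAbsorbing_d₅_zero

theorem not_hasNonzeroSquareZero_d₁ [IsReduced R] : ¬ HasNonzeroSquareZero (d₁ (R := R)) := by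
  rintro ⟨a, ha, haa⟩
  have sq_eq_zero : a ^ 2 = 0 := (sq a).trans (haa.eq isAbsorbing_d₁_zero)
  have eq_zero : a = 0 := (pow_eq_zero_iff two_ne_zero).1 sq_eq_zero
  exact ha (eq_zero ▸ isAbsorbing_d₁_zero)

theorem hasNonzeroIdempotent_d₂ [Nontrivial R] : HasNonzeroIdempotent (d₂ (R := R)) := by
  refine ⟨(0, 1), fun hθ => ?_, by simp [d₂]⟩
  simpa using hθ.eq isAbsorbing_d₂_zero

theorem not_hasNonzeroIdempotent_d₆ : ¬ HasNonzeroIdempotent (d₆ (R := R)) := by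
  rintro ⟨a, ha, haa⟩
  have snd_eq_zero : a.2 = 0 := (congrArg Prod.snd haa).symm
  have eq_zero : a = 0 := by rw [← haa, d₆, snd_eq_zero, mul_zero, Prod.mk_zero_zero]
  exact ha (eq_zero ▸ isAbsorbing_d₆_zero)

theorem stmt18_general [Nontrivial R] [IsReduced R] :
    [d₁ (R := R), d₂, d₃, d₄, d₅, d₆].Pairwise fun m m' => ¬ MulIso m m' := by
  simp only [List.pairwise_cons, List.forall_mem_cons, List.not_mem_nil, false_implies,
    implies_true, List.Pairwise.nil, and_true]
  refine ⟨⟨?d₁d₂, ?d₁d₃, ?d₁d₄, ?d₁d₅, ?d₁d₆⟩, ⟨?d₂d₃, ?d₂d₄, ?d₂d₅, ?d₂d₆⟩,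
    ⟨?d₃d₄, ?d₃d₅, ?d₃d₆⟩, ⟨?d₄d₅, ?d₄d₆⟩, ?d₅d₆⟩ <;> intro h
  case d₁d₂ => exact not_hasLeftUnit_d₂ (h.hasLeftUnit hasLeftUnit_d₁)
  case d₁d₃ => exact not_hasLeftUnit_d₃ (h.hasLeftUnit hasLeftUnit_d₁)
  case d₁d₄ => exact not_hasRightUnit_d₄ (h.hasRightUnit hasRightUnit_d₁)
  case d₁d₅ =>
    exact not_hasNonzeroSquareZero_d₁ (h.symm.hasNonzeroSquareZero hasNonzeroSquareZero_d₅)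
  case d₁d₆ => exact not_hasLeftUnit_d₆ (h.hasLeftUnit hasLeftUnit_d₁)
  case d₂d₃ => exact not_hasRightUnit_d₂ (h.symm.hasRightUnit hasRightUnit_d₃)
  case d₂d₄ => exact not_hasLeftUnit_d₂ (h.symm.hasLeftUnit hasLeftUnit_d₄)
  case d₂d₅ => exact not_hasLeftUnit_d₂ (h.symm.hasLeftUnit hasLeftUnit_d₅)
  case d₂d₆ => exact not_hasNonzeroIdempotent_d₆ (h.hasNonzeroIdempotent hasNonzeroIdempotent_d₂)
  case d₃d₄ => exact not_hasRightUnit_d₄ (h.hasRightUnit hasRightUnit_d₃)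
  case d₃d₅ => exact not_hasLeftUnit_d₃ (h.symm.hasLeftUnit hasLeftUnit_d₅)
  case d₃d₆ => exact not_hasRightUnit_d₆ (h.hasRightUnit hasRightUnit_d₃)
  case d₄d₅ => exact not_hasRightUnit_d₄ (h.symm.hasRightUnit hasRightUnit_d₅)
  case d₄d₆ => exact not_hasLeftUnit_d₆ (h.hasLeftUnit hasLeftUnit_d₄)
  case d₅d₆ => exact not_hasLeftUnit_d₆ (h.hasLeftUnit hasLeftUnit_d₅)

end Semiring

/-- The six 2-dimensional complex algebras `d₁, …, d₆` are pairwise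
non-isomorphic. -/
theorem stmt18 :
    ∀ m m' : V → V → V, m ∈ [mul1, mul2, mul3, mul4, mul5, mul6] →
      m' ∈ [mul1, mul2, mul3, mul4, mul5, mul6] → m ≠ m' → ¬ AlgIso m m' := by
  intro m m' hm hm' hne h
  exact stmt18_general.forall hm hm' hne h.mulIso
end
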